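/- Let μ be a non-degenerate probability measure on ℝ, symmetric about 0, satisfying E_μ[exp(λ|X|^p)] < ∞ for all λ > 0 with some p ≥ 2, and assume α''(x) ≤ α''(y) whenever |x| ≥ |y|. For θ ≥ 0 and B ≠ 0 define 𝔳_{θ,B}(x) := θx² + Bx − xβ(x) + α(β(x)) for x ∈ cl(N). Then 𝔳_{θ,B} has a unique global maximizer t on cl(N); moreover t has the same (strict) sign as B and satisfies t = α'(2θt + B). -/

import Mathlib

/-!
Write `a` for the log-mgf `α` and `m = α'`. Since `m` is a bijection onto `N`, the function
`𝔳_{θ,B}` is studied through the parametrisation `x = m s`, where it reads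
`F s = θ (m s)² + B (m s) - s (m s) + a s`, with derivative `m' s * (2θ m s + B - s)`.

By the symmetry `x ↦ -x` it suffices to treat `B > 0` (`exists_max_of_pos`). As `α''` is even and
decreasing in `|s|`, `m` is concave on `[0,∞)`, hence so is `G s = 2θ m s + B - s`. Now `G 0 = B > 0`,
and the tail condition with `p ≥ 2` gives `a s = o(s²)`, so that `m s = o(s)` and `G` becomes negative
(`exists_growth`). Thus `G` changes sign exactly once on `[0,∞)`, at some `r > 0`, and `F` strictly
increases on `[0,r]` and strictly decreases on `[r,∞)`. For negative arguments,
`F (-s) = F s - 2 B m s < F s` because `m` is odd and `a` is even. Hence `r` is the unique maximiser of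
`F` (`exists_max_param`), and `t = m r`.

A point `x ∉ N` lies strictly above or strictly below `N`. In the first case, if `x` is an atom,
then `a s ≥ s x + log μ{x}` for every `s` (`log_atom_le`), and this gives
`F s - 𝔳 x ≥ (x - m s) (s - B - θ (m s + x)) ≥ 0` for large `s`; together with `F s < F r` for
`s > r` this excludes `x`. In the second case `-x` lies above `N` and `𝔳 x < 𝔳 (-x)`.
-/

open MeasureTheory Filter Set
open scoped ENNReal NNReal

noncomputable section

namespace GibbsMulti

/-- The log moment generating function `α(θ) = log ∫ e^{θx} dμ(x)`. -/
def cgf (μ : Measure ℝ) (θ : ℝ) : ℝ := Real.log (∫ x, Real.exp (θ * x) ∂μ)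

/-- `α'`, the derivative of the log-mgf. -/
def cgf' (μ : Measure ℝ) : ℝ → ℝ := deriv (cgf μ)

/-- `N = α'(ℝ)`. -/
def Ndom (μ : Measure ℝ) : Set ℝ := Set.range (cgf' μ)

/-- `β`, the inverse of `α'` on `N`. -/
def betaInv (μ : Measure ℝ) : ℝ → ℝ := Function.invFun (cgf' μ)

/-- `γ(θ) = θ α'(θ) − α(θ)`. -/
def gammaFn (μ : Measure ℝ) (θ : ℝ) : ℝ := θ * cgf' μ θ - cgf μ θ

open Classical in
/-- The extended function `γ∘β : cl(N) → [0,∞]`, with values `D(δ_t‖μ) = −log μ({t})`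
at the endpoints of `N` (which is `∞` when `μ({t}) = 0`). -/
def gb (μ : Measure ℝ) (t : ℝ) : ℝ≥0∞ :=
  if t ∈ Ndom μ then ENNReal.ofReal (gammaFn μ (betaInv μ t))
  else if μ {t} = 0 then ⊤ else ENNReal.ofReal (- Real.log (μ {t}).toReal)

/-- `μ` is non-degenerate. -/
def Nondeg (μ : Measure ℝ) : Prop := ∀ c : ℝ, μ ≠ Measure.dirac c

/-- Tail condition with (finite) exponent `p`: `E_μ[exp(λ |X|^p)] < ∞` for every `λ > 0`. -/
def TailCond (μ : Measure ℝ) (p : ℝ) : Prop :=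
  ∀ l : ℝ, 0 < l → Integrable (fun x => Real.exp (l * |x| ^ p)) μ

/-- `μ` is stochastically non-negative. -/
def StochNonneg (μ : Measure ℝ) : Prop :=
  ∀ t : ℝ, 0 < t → -t ∈ Ndom μ →
    t ∈ Ndom μ ∧ gammaFn μ (betaInv μ t) ≤ gammaFn μ (betaInv μ (-t))

/-- The function `𝔳_{θ,B}(x) = θx² + Bx − γ(β(x))`, with value `−∞` where `γ(β(x)) = ∞`,
as an extended-real valued function. -/
def vFn (μ : Measure ℝ) (θ B : ℝ) (x : ℝ) : EReal :=
  ((θ * x ^ 2 + B * x : ℝ) : EReal) - ((gb μ x : ℝ≥0∞) : EReal)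

/-! ### The one-variable optimisation problem -/

/-- The optimisation problem in the parameter `s` (with `x = m s`): concavity of `m` on `[0,∞)`
makes `2θ m s + B - s` change sign exactly once there. -/
lemma exists_max_param (a m m' : ℝ → ℝ) (θ B : ℝ) (hθ : 0 ≤ θ) (hB : 0 < B)
    (ha : ∀ s, HasDerivAt a (m s) s) (hm : ∀ s, HasDerivAt m (m' s) s) (hpos : ∀ s, 0 < m' s)
    (hanti : ∀ x y : ℝ, |y| ≤ |x| → m' x ≤ m' y)
    (heven : ∀ s, a (-s) = a s) (hodd : ∀ s, m (-s) = -m s)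
    (hgrow : ∃ s, 0 < s ∧ 2 * θ * m s + B < s) :
    ∃ r, 0 < r ∧ r = 2 * θ * m r + B ∧
      ∀ s, s ≠ r → θ * m s ^ 2 + B * m s - (s * m s - a s)
        < θ * m r ^ 2 + B * m r - (r * m r - a r) := by
  have hmd : Differentiable ℝ m := fun s => (hm s).differentiableAt
  have hm0 : m 0 = 0 := by have := hodd 0; simp at this; linarith
  have hderm : deriv m = m' := funext fun s => (hm s).deriv
  have hsm : StrictMono m := strictMono_of_deriv_pos (by rw [hderm]; exact hpos)
  have hconc : ConcaveOn ℝ (Ici (0 : ℝ)) m := by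
    refine AntitoneOn.concaveOn_of_deriv (convex_Ici 0) hmd.continuous.continuousOn
      hmd.differentiableOn ?_
    rw [hderm, interior_Ici]
    intro x hx y hy hxy
    apply hanti
    rw [abs_of_pos hx, abs_of_pos hy]
    exact hxy
  set G : ℝ → ℝ := fun s => 2 * θ * m s + B - s with hG
  have hGc : Continuous G := by
    have := hmd.continuous
    fun_prop
  have hGconc : ConcaveOn ℝ (Ici (0 : ℝ)) G := by
    have h1 : ConcaveOn ℝ (Ici (0 : ℝ)) (fun s => 2 * θ * m s + B) :=
      (hconc.smul (by positivity : (0 : ℝ) ≤ 2 * θ)).add_const B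
    exact h1.sub (convexOn_id (convex_Ici 0))
  have hG0 : 0 < G 0 := by simp [hG, hm0, hB]
  obtain ⟨s₁, hs₁, hG1⟩ := hgrow
  obtain ⟨r, hr, hGr⟩ : ∃ r ∈ Icc 0 s₁, G r = 0 :=
    intermediate_value_Icc' hs₁.le hGc.continuousOn ⟨by simp only [hG]; linarith, hG0.le⟩
  have hr0 : 0 < r := by
    rcases hr.1.eq_or_lt with h | h
    · rw [← h] at hGr; linarith
    · exact h
  have hbefore : ∀ s, 0 < s → s < r → 0 < G s := by
    intro s h0 hs
    have h := hGconc.slope_anti_adjacent (mem_Ici.2 le_rfl) (mem_Ici.2 hr0.le) h0 hs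
    rw [div_le_div_iff₀ (by linarith) (by linarith), hGr] at h
    by_contra hc
    push Not at hc
    nlinarith [mul_nonneg (sub_nonneg.2 hc) h0.le, mul_pos hG0 (sub_pos.2 hs),
      mul_nonneg (neg_nonneg.2 hc) (sub_nonneg.2 hs.le)]
  have hafter : ∀ s, r < s → G s < 0 := by
    intro s hs
    have h := hGconc.slope_anti_adjacent (mem_Ici.2 le_rfl) (mem_Ici.2 (hr0.trans hs).le) hr0 hs
    rw [div_le_div_iff₀ (by linarith) (by linarith), hGr] at h
    by_contra hc
    push Not at hc
    nlinarith [mul_nonneg hc hr0.le, mul_pos hG0 (sub_pos.2 hs)]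
  set F : ℝ → ℝ := fun s => θ * m s ^ 2 + B * m s - (s * m s - a s) with hF
  have hFd : ∀ s, HasDerivAt F (m' s * G s) s := by
    intro s
    have h := (((hm s).pow 2).const_mul θ).add ((hm s).const_mul B)
    have h2 := h.sub (((hasDerivAt_id s).mul (hm s)).sub (ha s))
    refine h2.congr_deriv ?_
    simp [hG]
    ring
  have hFc : Continuous F := continuous_iff_continuousAt.2 fun s => (hFd s).continuousAt
  have hinc : StrictMonoOn F (Icc 0 r) := by
    refine strictMonoOn_of_deriv_pos (convex_Icc 0 r) hFc.continuousOn fun s hs => ?_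
    rw [interior_Icc] at hs
    rw [(hFd s).deriv]
    exact mul_pos (hpos s) (hbefore s hs.1 hs.2)
  have hdec : StrictAntiOn F (Ici r) := by
    refine strictAntiOn_of_deriv_neg (convex_Ici r) hFc.continuousOn fun s hs => ?_
    rw [interior_Ici] at hs
    rw [(hFd s).deriv]
    exact mul_neg_of_pos_of_neg (hpos s) (hafter s hs)
  have hnn : ∀ s, 0 ≤ s → s ≠ r → F s < F r := by
    intro s h0 hne
    rcases lt_or_gt_of_ne hne with h | h
    · exact hinc ⟨h0, h.le⟩ ⟨hr0.le, le_rfl⟩ h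
    · exact hdec (mem_Ici.2 le_rfl) (mem_Ici.2 h.le) h
  refine ⟨r, hr0, by simp only [hG] at hGr; linarith, fun s hne => ?_⟩
  change F s < F r
  rcases le_or_gt 0 s with h | h
  · exact hnn s h hne
  · -- reflecting a negative parameter strictly increases `F`
    have h1 : F s < F (-s) := by
      have : m s < 0 := hm0 ▸ hsm h
      simp only [hF, hodd, heven]
      nlinarith [mul_pos hB (neg_pos.2 this)]
    rcases eq_or_ne (-s) r with h2 | h2
    · rwa [h2] at h1
    · exact h1.trans (hnn (-s) (by linarith) h2)

/-! ### The log-moment generating function -/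

lemma integrable_exp_sq (μ : Measure ℝ) [IsProbabilityMeasure μ] {p : ℝ} (hp : 2 ≤ p)
    (htail : TailCond μ p) {l : ℝ} (hl : 0 < l) :
    Integrable (fun x => Real.exp (l * x ^ 2)) μ := by
  refine Integrable.mono' ((htail l hl).const_mul (Real.exp l))
    (by fun_prop) (Filter.Eventually.of_forall fun x => ?_)
  rw [Real.norm_of_nonneg (Real.exp_pos _).le, ← Real.exp_add]
  apply Real.exp_le_exp.2
  have : x ^ 2 ≤ 1 + |x| ^ p := by
    rcases le_total |x| 1 with h | h
    · have h1 : x ^ 2 ≤ 1 := by rw [← sq_abs]; nlinarith [abs_nonneg x]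
      have := Real.rpow_nonneg (abs_nonneg x) p
      linarith
    · have h1 : |x| ^ (2 : ℝ) ≤ |x| ^ p := Real.rpow_le_rpow_of_exponent_le h hp
      rw [Real.rpow_two, sq_abs] at h1
      linarith
  nlinarith

/-- `s x ≤ s² / (4 l) + l x²`, exponentiated. -/
lemma exp_mul_le {l : ℝ} (hl : 0 < l) (s x : ℝ) :
    Real.exp (s * x) ≤ Real.exp (s ^ 2 / (4 * l)) * Real.exp (l * x ^ 2) := by
  rw [← Real.exp_add]
  apply Real.exp_le_exp.2
  have : s ^ 2 / (4 * l) + l * x ^ 2 - s * x = (s - 2 * l * x) ^ 2 / (4 * l) := by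
    field_simp
    ring
  have h2 : 0 ≤ (s - 2 * l * x) ^ 2 / (4 * l) := by positivity
  linarith

lemma integrable_exp_mul (μ : Measure ℝ) [IsProbabilityMeasure μ] {p : ℝ} (hp : 2 ≤ p)
    (htail : TailCond μ p) (s : ℝ) : Integrable (fun x => Real.exp (s * x)) μ := by
  refine Integrable.mono' ((integrable_exp_sq μ hp htail one_pos).const_mul
    (Real.exp (s ^ 2 / (4 * 1)))) (by fun_prop) (Filter.Eventually.of_forall fun x => ?_)
  rw [Real.norm_of_nonneg (Real.exp_pos _).le]
  exact exp_mul_le one_pos s x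

lemma cgf_le (μ : Measure ℝ) [IsProbabilityMeasure μ] {p : ℝ} (hp : 2 ≤ p)
    (htail : TailCond μ p) {l : ℝ} (hl : 0 < l) (s : ℝ) :
    cgf μ s ≤ s ^ 2 / (4 * l) + Real.log (∫ x, Real.exp (l * x ^ 2) ∂μ) := by
  have hi := integrable_exp_sq μ hp htail hl
  have h1 : ∫ x, Real.exp (s * x) ∂μ
      ≤ Real.exp (s ^ 2 / (4 * l)) * ∫ x, Real.exp (l * x ^ 2) ∂μ := by
    rw [← integral_const_mul]
    exact integral_mono (integrable_exp_mul μ hp htail s) (hi.const_mul _)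
      fun x => exp_mul_le hl s x
  have h2 := Real.log_le_log (integral_exp_pos (integrable_exp_mul μ hp htail s)) h1
  rwa [Real.log_mul (Real.exp_pos _).ne' (integral_exp_pos hi).ne', Real.log_exp] at h2

lemma cgf_eq (μ : Measure ℝ) : cgf μ = ProbabilityTheory.cgf id μ := rfl

lemma mem_interior_expSet (μ : Measure ℝ) [IsProbabilityMeasure μ] {p : ℝ} (hp : 2 ≤ p)
    (htail : TailCond μ p) (s : ℝ) :
    s ∈ interior (ProbabilityTheory.integrableExpSet id μ) := by
  have : ProbabilityTheory.integrableExpSet id μ = univ :=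
    eq_univ_of_forall fun s => integrable_exp_mul μ hp htail s
  simp [this]

lemma hasDerivAt_cgf (μ : Measure ℝ) [IsProbabilityMeasure μ] {p : ℝ} (hp : 2 ≤ p)
    (htail : TailCond μ p) (s : ℝ) : HasDerivAt (cgf μ) (cgf' μ s) s :=
  (ProbabilityTheory.analyticAt_cgf
    (mem_interior_expSet μ hp htail s)).differentiableAt.hasDerivAt

lemma hasDerivAt_cgf' (μ : Measure ℝ) [IsProbabilityMeasure μ] {p : ℝ} (hp : 2 ≤ p)
    (htail : TailCond μ p) (s : ℝ) : HasDerivAt (cgf' μ) (deriv (deriv (cgf μ)) s) s :=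
  (ProbabilityTheory.analyticAt_cgf
    (mem_interior_expSet μ hp htail s)).deriv.differentiableAt.hasDerivAt

/-- `α''` is, up to a positive factor, a weighted second moment of `x - α'(s)`; it vanishes only if
`μ` is a point mass. -/
lemma deriv2_cgf_pos (μ : Measure ℝ) [IsProbabilityMeasure μ] (hND : Nondeg μ) {p : ℝ}
    (hp : 2 ≤ p) (htail : TailCond μ p) (s : ℝ) : 0 < deriv (deriv (cgf μ)) s := by
  have hmem := mem_interior_expSet μ hp htail s
  have h := ProbabilityTheory.iteratedDeriv_two_cgf_eq_integral hmem
  rw [iteratedDeriv_succ, iteratedDeriv_one] at h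
  set c := deriv (ProbabilityTheory.cgf id μ) s
  rw [cgf_eq, h]
  refine div_pos ?_ (ProbabilityTheory.mgf_pos (integrable_exp_mul μ hp htail s))
  have hInt : Integrable (fun x : ℝ => (id x - c) ^ 2 * Real.exp (s * id x)) μ := by
    have h0 := ProbabilityTheory.integrable_pow_mul_exp_of_mem_interior_integrableExpSet hmem 0
    have h1 := ProbabilityTheory.integrable_pow_mul_exp_of_mem_interior_integrableExpSet hmem 1
    have h2 := ProbabilityTheory.integrable_pow_mul_exp_of_mem_interior_integrableExpSet hmem 2
    refine ((h2.sub (h1.const_mul (2 * c))).add (h0.const_mul (c ^ 2))).congr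
      (Filter.Eventually.of_forall fun x => ?_)
    simp
    ring
  have hnn : ∀ x : ℝ, 0 ≤ (id x - c) ^ 2 * Real.exp (s * id x) := fun x => by positivity
  refine lt_of_le_of_ne (integral_nonneg hnn) fun h0 => ?_
  have h1 := (integral_eq_zero_iff_of_nonneg hnn hInt).1 h0.symm
  have h2 : (id : ℝ → ℝ) =ᵐ[μ] fun _ => c := by
    filter_upwards [h1] with x hx
    have h3 : (id x - c) ^ 2 = 0 := by simpa [(Real.exp_pos _).ne'] using hx
    have h4 := pow_eq_zero_iff (two_ne_zero) |>.1 h3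
    linarith
  apply hND c
  have h3 := Measure.map_congr (mβ := Real.measurableSpace) h2
  rwa [Measure.map_id, Measure.map_const, measure_univ, one_smul] at h3

lemma cgf_zero (μ : Measure ℝ) [IsProbabilityMeasure μ] : cgf μ 0 = 0 := by simp [cgf]

lemma cgf_even (μ : Measure ℝ) (hsym : μ.map (fun x : ℝ => -x) = μ) (s : ℝ) :
    cgf μ (-s) = cgf μ s := by
  unfold cgf
  congr 1
  conv_rhs => rw [← hsym]
  rw [integral_map (by fun_prop) (by fun_prop)]
  simp

lemma cgf'_odd (μ : Measure ℝ) (hsym : μ.map (fun x : ℝ => -x) = μ) (s : ℝ) :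
    cgf' μ (-s) = - cgf' μ s := by
  have h := deriv_comp_neg (cgf μ) s
  simp only [cgf_even μ hsym] at h
  unfold cgf'
  rw [show deriv (cgf μ) s = deriv (fun x => cgf μ x) s from rfl, h]
  simp

/-- `α'(s) = o(s)`, in the form needed: `s α'(s) ≤ α(2s) - α(s)` by monotonicity of `α'`, while
`α(2s) ≤ s²/l + C_l` for every `l > 0`. -/
lemma exists_growth (μ : Measure ℝ) [IsProbabilityMeasure μ] (hND : Nondeg μ)
    (hsym : μ.map (fun x : ℝ => -x) = μ) {p : ℝ} (hp : 2 ≤ p) (htail : TailCond μ p)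
    (θ B : ℝ) (hθ : 0 ≤ θ) (hB : 0 < B) : ∃ s, 0 < s ∧ 2 * θ * cgf' μ s + B < s := by
  have hsm : StrictMono (cgf' μ) := strictMono_of_deriv_pos (deriv2_cgf_pos μ hND hp htail)
  have hm0 : cgf' μ 0 = 0 := by have := cgf'_odd μ hsym 0; simp at this; linarith
  have hd := hasDerivAt_cgf μ hp htail
  have hc : Continuous (cgf μ) := continuous_iff_continuousAt.2 fun s => (hd s).continuousAt
  set l : ℝ := 4 * θ + 1 with hl
  have hl0 : 0 < l := by positivity
  set C := Real.log (∫ x, Real.exp (l * x ^ 2) ∂μ)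
  set s : ℝ := 2 * (B + 2 * θ * |C|) + 2 with hs
  have hθC : 0 ≤ 2 * θ * |C| := by positivity
  have hs1 : 1 ≤ s := by linarith
  have hs0 : 0 < s := by linarith
  refine ⟨s, hs0, ?_⟩
  obtain ⟨c, hc1, hc2⟩ := exists_hasDerivAt_eq_slope (cgf μ) (cgf' μ) (by linarith : s < 2 * s)
    hc.continuousOn fun x _ => hd x
  obtain ⟨d, hd1, hd2⟩ := exists_hasDerivAt_eq_slope (cgf μ) (cgf' μ) hs0
    hc.continuousOn fun x _ => hd x
  have h1 : cgf' μ s * s ≤ cgf μ (2 * s) - cgf μ s := by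
    have := hsm hc1.1
    rw [hc2, show 2 * s - s = s by ring, lt_div_iff₀ hs0] at this
    exact this.le
  have h2 : 0 ≤ cgf μ s := by
    have := hsm hd1.1
    rw [hd2, hm0, cgf_zero, sub_zero, sub_zero, lt_div_iff₀ hs0] at this
    linarith
  have h3 := cgf_le μ hp htail hl0 (2 * s)
  have h4 : 2 * θ * ((2 * s) ^ 2 / (4 * l)) ≤ s ^ 2 / 2 := by
    rw [show 2 * θ * ((2 * s) ^ 2 / (4 * l)) = 2 * θ * s ^ 2 / l by field_simp; ring,
      div_le_div_iff₀ hl0 two_pos]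
    nlinarith [sq_nonneg s]
  have h5 : cgf' μ s * s ≤ (2 * s) ^ 2 / (4 * l) + |C| := by linarith [le_abs_self C]
  have h6 : 2 * θ * (cgf' μ s * s) ≤ s ^ 2 / 2 + 2 * θ * |C| := by
    have := mul_le_mul_of_nonneg_left h5 (by positivity : 0 ≤ 2 * θ)
    linarith
  have h7 : (2 * θ * cgf' μ s + B) * s < s * s := by
    nlinarith [mul_le_mul_of_nonneg_left hs1 hθC]
  exact lt_of_mul_lt_mul_right h7 hs0.le

/-- Keeping only the contribution of the atom at `x` in the moment generating function. -/
lemma log_atom_le (μ : Measure ℝ) [IsProbabilityMeasure μ] {p : ℝ} (hp : 2 ≤ p)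
    (htail : TailCond μ p) (x : ℝ) (hx : μ {x} ≠ 0) (s : ℝ) :
    Real.log (μ {x}).toReal ≤ cgf μ s - s * x := by
  have hi := integrable_exp_mul μ hp htail s
  have h1 : (μ {x}).toReal * Real.exp (s * x) ≤ ∫ y, Real.exp (s * y) ∂μ := by
    have := setIntegral_le_integral (s := {x}) hi
      (Filter.Eventually.of_forall fun y => (Real.exp_pos _).le)
    rwa [integral_singleton, smul_eq_mul] at this
  have hpos : 0 < (μ {x}).toReal := ENNReal.toReal_pos hx (measure_ne_top _ _)
  have h2 := Real.log_le_log (mul_pos hpos (Real.exp_pos _)) h1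
  rw [Real.log_mul hpos.ne' (Real.exp_pos _).ne', Real.log_exp] at h2
  unfold cgf
  linarith

/-! ### The extended-valued function `𝔳` -/

lemma gammaFn_nonneg (μ : Measure ℝ) [IsProbabilityMeasure μ] (hND : Nondeg μ) {p : ℝ}
    (hp : 2 ≤ p) (htail : TailCond μ p) (s : ℝ) : 0 ≤ gammaFn μ s := by
  have hsm : StrictMono (cgf' μ) := strictMono_of_deriv_pos (deriv2_cgf_pos μ hND hp htail)
  have hd := hasDerivAt_cgf μ hp htail
  have hc : Continuous (cgf μ) := continuous_iff_continuousAt.2 fun s => (hd s).continuousAt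
  unfold gammaFn
  rcases lt_trichotomy s 0 with h | h | h
  · obtain ⟨d, hd1, hd2⟩ := exists_hasDerivAt_eq_slope (cgf μ) (cgf' μ) h
      hc.continuousOn fun x _ => hd x
    have := hsm hd1.1
    rw [hd2, cgf_zero, lt_div_iff₀ (by linarith)] at this
    linarith
  · simp [h, cgf_zero]
  · obtain ⟨d, hd1, hd2⟩ := exists_hasDerivAt_eq_slope (cgf μ) (cgf' μ) h
      hc.continuousOn fun x _ => hd x
    have := hsm hd1.2
    rw [hd2, cgf_zero, div_lt_iff₀ (by linarith)] at this
    linarith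

lemma vFn_param (μ : Measure ℝ) [IsProbabilityMeasure μ] (hND : Nondeg μ) {p : ℝ}
    (hp : 2 ≤ p) (htail : TailCond μ p) (θ B s : ℝ) :
    vFn μ θ B (cgf' μ s) = ((θ * cgf' μ s ^ 2 + B * cgf' μ s
      - (s * cgf' μ s - cgf μ s) : ℝ) : EReal) := by
  have hsm : StrictMono (cgf' μ) := strictMono_of_deriv_pos (deriv2_cgf_pos μ hND hp htail)
  have hb : betaInv μ (cgf' μ s) = s := Function.leftInverse_invFun hsm.injective s
  have hmem : cgf' μ s ∈ Ndom μ := ⟨s, rfl⟩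
  rw [vFn, gb, if_pos hmem, hb, EReal.coe_ennreal_ofReal,
    max_eq_left (gammaFn_nonneg μ hND hp htail s), ← EReal.coe_sub]
  rfl

lemma vFn_of_notMem (μ : Measure ℝ) [IsProbabilityMeasure μ] (θ B x : ℝ) (hx : x ∉ Ndom μ) :
    vFn μ θ B x = if μ {x} = 0 then ⊥ else
      ((θ * x ^ 2 + B * x + Real.log (μ {x}).toReal : ℝ) : EReal) := by
  rw [vFn, gb, if_neg hx]
  split_ifs with h
  · simp
  · have : 0 ≤ - Real.log (μ {x}).toReal := by
      have := Real.log_nonpos (ENNReal.toReal_nonneg (a := μ {x}))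
        (by simpa [Measure.real] using measureReal_le_one (μ := μ) (s := {x}))
      linarith
    rw [EReal.coe_ennreal_ofReal, max_eq_left this, ← EReal.coe_sub, sub_neg_eq_add]

lemma measure_neg_singleton (μ : Measure ℝ) (hsym : μ.map (fun x : ℝ => -x) = μ) (x : ℝ) :
    μ {-x} = μ {x} := by
  conv_rhs => rw [← hsym]
  rw [Measure.map_apply measurable_neg (measurableSet_singleton x)]
  congr 1
  ext y
  simp

lemma neg_mem_Ndom (μ : Measure ℝ) (hsym : μ.map (fun x : ℝ => -x) = μ) {x : ℝ}
    (hx : x ∈ Ndom μ) : -x ∈ Ndom μ := by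
  obtain ⟨s, rfl⟩ := hx
  exact ⟨-s, cgf'_odd μ hsym s⟩

lemma vFn_neg (μ : Measure ℝ) [IsProbabilityMeasure μ] (hND : Nondeg μ)
    (hsym : μ.map (fun x : ℝ => -x) = μ) {p : ℝ} (hp : 2 ≤ p) (htail : TailCond μ p)
    (θ B x : ℝ) : vFn μ θ (-B) (-x) = vFn μ θ B x := by
  by_cases hx : x ∈ Ndom μ
  · obtain ⟨s, rfl⟩ := hx
    rw [← cgf'_odd μ hsym, vFn_param μ hND hp htail, vFn_param μ hND hp htail,
      cgf'_odd μ hsym, cgf_even μ hsym]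
    congr 1
    ring
  · have hx' : -x ∉ Ndom μ := fun h => hx (by simpa using neg_mem_Ndom μ hsym h)
    rw [vFn_of_notMem μ _ _ _ hx, vFn_of_notMem μ _ _ _ hx', measure_neg_singleton μ hsym]
    simp

/-- For `B > 0`, a strict maximiser of `𝔳` on `N` also beats every point off `N`. -/
lemma vFn_lt_of_notMem (μ : Measure ℝ) [IsProbabilityMeasure μ] (hND : Nondeg μ)
    (hsym : μ.map (fun x : ℝ => -x) = μ) {p : ℝ} (hp : 2 ≤ p) (htail : TailCond μ p)
    (θ B : ℝ) (hθ : 0 ≤ θ) (hB : 0 < B) (r : ℝ)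
    (hmax : ∀ s, s ≠ r → vFn μ θ B (cgf' μ s) < vFn μ θ B (cgf' μ r))
    (x : ℝ) (hx : x ∉ Ndom μ) : vFn μ θ B x < vFn μ θ B (cgf' μ r) := by
  have hm0 : cgf' μ 0 = 0 := by have := cgf'_odd μ hsym 0; simp at this; linarith
  have hcont : Continuous (cgf' μ) :=
    continuous_iff_continuousAt.2 fun s => (hasDerivAt_cgf' μ hp htail s).continuousAt
  -- the case of a point above `N`, which is then positive since `0 ∈ N`
  have key : ∀ y, y ∉ Ndom μ → 0 < y → vFn μ θ B y < vFn μ θ B (cgf' μ r) := by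
    intro y hy hy0
    have hlt : ∀ s, cgf' μ s < y := by
      intro s
      by_contra hc
      push Not at hc
      exact hy (mem_range_of_exists_le_of_exists_ge hcont ⟨0, hm0.trans_le hy0.le⟩ ⟨s, hc⟩)
    by_cases h0 : μ {y} = 0
    · rw [vFn_of_notMem μ _ _ _ hy, if_pos h0, vFn_param μ hND hp htail]
      exact EReal.bot_lt_coe _
    · set s : ℝ := max (r + 1) (B + 2 * θ * y) with hs
      have hs1 : r + 1 ≤ s := le_max_left _ _
      have hs2 : B + 2 * θ * y ≤ s := le_max_right _ _
      refine lt_of_le_of_lt ?_ (hmax s (by linarith))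
      rw [vFn_of_notMem μ _ _ _ hy, if_neg h0, vFn_param μ hND hp htail, EReal.coe_le_coe_iff]
      have hl := log_atom_le μ hp htail y h0 s
      have h1 : 0 ≤ y - cgf' μ s := by linarith [hlt s]
      have h2 : 0 ≤ s - B - θ * (cgf' μ s + y) := by
        nlinarith [mul_nonneg hθ h1]
      nlinarith [mul_nonneg h1 h2]
  have hne : x ≠ 0 := fun h => hx ⟨0, by rw [hm0, h]⟩
  rcases lt_or_gt_of_ne hne with h | h
  · have hx' : -x ∉ Ndom μ := fun h' => hx (by simpa using neg_mem_Ndom μ hsym h')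
    refine lt_of_le_of_lt ?_ (key (-x) hx' (by linarith))
    rw [vFn_of_notMem μ _ _ _ hx, vFn_of_notMem μ _ _ _ hx', measure_neg_singleton μ hsym]
    split_ifs
    · exact le_rfl
    · rw [EReal.coe_le_coe_iff]
      nlinarith
  · exact key x hx h

/-- The case `B > 0`; the maximiser beats every other real number, in `closure N` or not. -/
lemma exists_max_of_pos (μ : Measure ℝ) [IsProbabilityMeasure μ] (hND : Nondeg μ)
    (hsym : μ.map (fun x : ℝ => -x) = μ) {p : ℝ} (hp : 2 ≤ p) (htail : TailCond μ p)
    (hmono : ∀ x y : ℝ, |y| ≤ |x| → deriv (deriv (cgf μ)) x ≤ deriv (deriv (cgf μ)) y)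
    (θ : ℝ) (hθ : 0 ≤ θ) (B : ℝ) (hB : 0 < B) :
    ∃ t ∈ Ndom μ, (∀ x, x ≠ t → vFn μ θ B x < vFn μ θ B t) ∧ 0 < t ∧
      t = cgf' μ (2 * θ * t + B) := by
  have hsm : StrictMono (cgf' μ) := strictMono_of_deriv_pos (deriv2_cgf_pos μ hND hp htail)
  have hm0 : cgf' μ 0 = 0 := by have := cgf'_odd μ hsym 0; simp at this; linarith
  obtain ⟨r, hr0, hr, hmax⟩ := exists_max_param (cgf μ) (cgf' μ) (deriv (deriv (cgf μ))) θ B hθ hB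
    (hasDerivAt_cgf μ hp htail) (hasDerivAt_cgf' μ hp htail) (deriv2_cgf_pos μ hND hp htail)
    hmono (cgf_even μ hsym) (cgf'_odd μ hsym) (exists_growth μ hND hsym hp htail θ B hθ hB)
  have hmax' : ∀ s, s ≠ r → vFn μ θ B (cgf' μ s) < vFn μ θ B (cgf' μ r) := by
    intro s hs
    rw [vFn_param μ hND hp htail, vFn_param μ hND hp htail, EReal.coe_lt_coe_iff]
    exact hmax s hs
  refine ⟨cgf' μ r, ⟨r, rfl⟩, fun x hx => ?_, hm0 ▸ hsm hr0, by rw [← hr]⟩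
  by_cases hxN : x ∈ Ndom μ
  · obtain ⟨s, rfl⟩ := hxN
    exact hmax' s fun h => hx (by rw [h])
  · exact vFn_lt_of_notMem μ hND hsym hp htail θ B hθ hB r hmax' x hxN

/-- for `θ ≥ 0` and `B ≠ 0`, `𝔳_{θ,B}` has a unique global maximizer
`t` on `cl(N)`; it has the same strict sign as `B` and satisfies `t = α'(2θt + B)`. -/
theorem statement6
    (μ : Measure ℝ) [IsProbabilityMeasure μ] (hND : Nondeg μ)
    (hsym : μ.map (fun x : ℝ => -x) = μ)
    (p : ℝ) (hp : 2 ≤ p) (htail : TailCond μ p)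
    (hmono : ∀ x y : ℝ, |y| ≤ |x| → deriv (deriv (cgf μ)) x ≤ deriv (deriv (cgf μ)) y)
    (θ : ℝ) (hθ : 0 ≤ θ) (B : ℝ) (hB : B ≠ 0) :
    ∃ t ∈ closure (Ndom μ),
      (∀ x ∈ closure (Ndom μ), vFn μ θ B x ≤ vFn μ θ B t) ∧
      (∀ x ∈ closure (Ndom μ), x ≠ t → vFn μ θ B x < vFn μ θ B t) ∧
      (0 < B → 0 < t) ∧ (B < 0 → t < 0) ∧
      t = cgf' μ (2 * θ * t + B) := by
  suffices h : ∃ t ∈ Ndom μ, (∀ x, x ≠ t → vFn μ θ B x < vFn μ θ B t) ∧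
      (0 < B → 0 < t) ∧ (B < 0 → t < 0) ∧ t = cgf' μ (2 * θ * t + B) by
    obtain ⟨t, ht, h1, h2⟩ := h
    refine ⟨t, subset_closure ht, fun x _ => ?_, fun x _ => h1 x, h2⟩
    rcases eq_or_ne x t with rfl | hx
    · exact le_rfl
    · exact (h1 x hx).le
  rcases lt_or_gt_of_ne hB with hneg | hpos
  · -- reflect the maximiser for `-B`
    obtain ⟨t, ht, h1, h2, h3⟩ :=
      exists_max_of_pos μ hND hsym hp htail hmono θ hθ (-B) (by linarith)
    refine ⟨-t, neg_mem_Ndom μ hsym ht, fun x hx => ?_, fun h => by linarith,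
      fun _ => by linarith, ?_⟩
    · have h4 := h1 (-x) fun h => hx (by rw [← h, neg_neg])
      rw [vFn_neg μ hND hsym hp htail] at h4
      rwa [← vFn_neg μ hND hsym hp htail θ B (-t), neg_neg]
    · rw [show 2 * θ * -t + B = -(2 * θ * t + -B) by ring, cgf'_odd μ hsym, ← h3]
  · obtain ⟨t, ht, h1, h2, h3⟩ := exists_max_of_pos μ hND hsym hp htail hmono θ hθ B hpos
    exact ⟨t, ht, h1, fun _ => h2, fun h => by linarith, h3⟩

end GibbsMulti
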